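/- Let ω₁, ω₂ ∈ ℂ be linearly independent over ℝ and L = ℤω₁ + ℤω₂ the lattice they generate, ℘ the associated Weierstrass function and g₂ its first invariant. Then for every z ∈ ℂ with z ∉ L, the second derivative of ℘ satisfies ℘''(z) = 6℘(z)² − g₂/2. -/

import Mathlib

/-- The Weierstrass `℘`-function of the lattice `L = ℤω₁ + ℤω₂`:
`℘(z) = 1/z² + ∑_{ω ∈ L, ω ≠ 0} (1/(z−ω)² − 1/ω²)`. -/
noncomputable def weierstrassP (ω₁ ω₂ : ℂ) (z : ℂ) : ℂ :=
  1 / z ^ 2 + ∑' p : {q : ℤ × ℤ // q ≠ 0},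
    (1 / (z - ((p.1.1 : ℂ) * ω₁ + (p.1.2 : ℂ) * ω₂)) ^ 2 -
      1 / ((p.1.1 : ℂ) * ω₁ + (p.1.2 : ℂ) * ω₂) ^ 2)

/-- The first lattice invariant `g₂ = 60 ∑_{ω ∈ L, ω ≠ 0} ω⁻⁴`. -/
noncomputable def latticeG₂ (ω₁ ω₂ : ℂ) : ℂ :=
  60 * ∑' p : {q : ℤ × ℤ // q ≠ 0},
    1 / ((p.1.1 : ℂ) * ω₁ + (p.1.2 : ℂ) * ω₂) ^ 4

open PeriodPair in
theorem aux_tsum (L : PeriodPair) (f : ℂ → ℂ) (hf : Summable fun l : L.lattice => f l) :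
    ∑' l : L.lattice, f l = f 0 + ∑' p : {q : ℤ × ℤ // q ≠ 0},
      f ((p.1.1 : ℂ) * L.ω₁ + (p.1.2 : ℂ) * L.ω₂) := by
  have e : ∀ x : ℤ × ℤ, f ((L.latticeEquivProd.symm x : L.lattice) : ℂ) =
      f ((x.1 : ℂ) * L.ω₁ + (x.2 : ℂ) * L.ω₂) := fun x => by
    rw [L.latticeEquiv_symm_apply]
  have h1 := L.latticeEquivProd.symm.toEquiv.tsum_eq (fun l : L.lattice => f l)
  have h2 := L.latticeEquivProd.symm.toEquiv.summable_iff.mpr hf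
  simp only [LinearEquiv.coe_toEquiv, e] at h1
  rw [← h1]
  have h2' : Summable fun x : ℤ × ℤ => f ((x.1 : ℂ) * L.ω₁ + (x.2 : ℂ) * L.ω₂) := by
    refine h2.congr fun x => ?_
    simp [← e]
  have h3 := h2'.tsum_subtype_add_tsum_subtype_compl {(0 : ℤ × ℤ)}
  rw [← h3]
  congr 1
  simp

theorem aux_P (L : PeriodPair) : weierstrassP L.ω₁ L.ω₂ = L.weierstrassP := by
  ext z
  have h := aux_tsum L (fun l => 1 / (z - l) ^ 2 - 1 / l ^ 2) (L.hasSum_weierstrassP z).summable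
  simp only [weierstrassP, PeriodPair.weierstrassP]
  rw [h]; simp

theorem aux_g (L : PeriodPair) : latticeG₂ L.ω₁ L.ω₂ = L.g₂ := by
  have h0 := (L.hasSum_sumInvPow 0 (r := 4) (by norm_num)).summable
  have h := aux_tsum L (fun l => (l ^ 4)⁻¹) (by simpa using h0)
  simp only [latticeG₂, PeriodPair.g₂, PeriodPair.G]
  rw [h]; simp

theorem aux_ne (L : PeriodPair) : ¬ ∀ z ∈ (L.lattice : Set ℂ)ᶜ, L.derivWeierstrassP z = 0 := by
  intro H
  have hc : ContinuousAt (fun z : ℂ => z ^ 3 * L.derivWeierstrassPExcept 0 z - 2) 0 := by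
    have := (L.analyticAt_derivWeierstrassPExcept 0).continuousAt
    fun_prop
  have h1 : Filter.Tendsto (fun z : ℂ => z ^ 3 * L.derivWeierstrassPExcept 0 z - 2)
      (nhdsWithin 0 {0}ᶜ) (nhds (-2)) := by
    have := hc.tendsto.mono_left (nhdsWithin_le_nhds (s := {0}ᶜ))
    simpa using this
  have h2 : Filter.Tendsto (fun z : ℂ => z ^ 3 * L.derivWeierstrassPExcept 0 z - 2)
      (nhdsWithin 0 {0}ᶜ) (nhds 0) := by
    refine tendsto_const_nhds.congr' ?_
    filter_upwards [self_mem_nhdsWithin,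
      nhdsWithin_le_nhds (L.compl_lattice_sdiff_singleton_mem_nhds 0)] with z hz hz'
    have hz0 : z ≠ 0 := hz
    have hzL : z ∈ (L.lattice : Set ℂ)ᶜ := fun h => hz' ⟨h, hz⟩
    have := L.derivWeierstrassPExcept_def 0 z
    rw [H z hzL] at this
    simp only [ZeroMemClass.coe_zero] at this
    rw [this]
    rw [zero_add, sub_zero, mul_div_cancel₀ _ (pow_ne_zero 3 hz0), sub_self]
  have := tendsto_nhds_unique h1 h2
  norm_num at this

theorem aux_main (L : PeriodPair) (z : ℂ) (hz : z ∉ L.lattice) :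
    deriv L.derivWeierstrassP z = 6 * L.weierstrassP z ^ 2 - L.g₂ / 2 := by
  have ho : IsOpen (L.lattice : Set ℂ)ᶜ := L.isClosed_lattice.isOpen_compl
  have hcount : (L.lattice : Set ℂ).Countable := by
    have : Countable L.lattice := L.latticeEquivProd.toEquiv.countable_iff.mpr inferInstance
    exact Set.to_countable _
  have hpc : IsPreconnected (L.lattice : Set ℂ)ᶜ :=
    (hcount.isPathConnected_compl_of_one_lt_rank
      (by rw [Complex.rank_real_complex]; norm_num)).isConnected.isPreconnected
  have hA := L.analyticOnNhd_derivWeierstrassP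
  have hP := L.analyticOnNhd_weierstrassP
  have hB : AnalyticOnNhd ℂ (fun z => deriv L.derivWeierstrassP z -
      (6 * L.weierstrassP z ^ 2 - L.g₂ / 2)) (L.lattice : Set ℂ)ᶜ := by
    intro w hw
    have h1 := hA.deriv w hw
    have h2 := hP w hw
    fun_prop
  have key : ∀ w ∈ (L.lattice : Set ℂ)ᶜ, L.derivWeierstrassP w *
      (deriv L.derivWeierstrassP w - (6 * L.weierstrassP w ^ 2 - L.g₂ / 2)) = 0 := by
    intro w hw
    have d1 : HasDerivAt L.derivWeierstrassP (deriv L.derivWeierstrassP w) w :=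
      (hA w hw).differentiableAt.hasDerivAt
    have d2 : HasDerivAt L.weierstrassP (L.derivWeierstrassP w) w := by
      rw [← L.deriv_weierstrassP]
      exact (hP w hw).differentiableAt.hasDerivAt
    have e1 := d1.pow 2
    have e2 := (((d2.pow 3).const_mul 4).sub (d2.const_mul L.g₂)).sub_const L.g₃
    have := e1.unique (e2.congr_of_eventuallyEq (by
      filter_upwards [ho.mem_nhds hw] with y hy
      simpa using L.derivWeierstrassP_sq y hy))
    norm_num at this
    linear_combination this / 2
  rcases AnalyticOnNhd.eq_zero_or_eq_zero_of_mul_eq_zero hA hB key hpc with h | h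
  · exact absurd h (aux_ne L)
  · exact sub_eq_zero.mp (h z hz)

/-- **Second-order Weierstrass differential equation.**
If `ω₁, ω₂` are linearly independent over `ℝ` and `z` is not in the lattice
`L = ℤω₁ + ℤω₂`, then `℘''(z) = 6 ℘(z)² − g₂/2`. -/
theorem weierstrassP_second_deriv (ω₁ ω₂ : ℂ)
    (hind : LinearIndependent ℝ ![ω₁, ω₂]) (z : ℂ)
    (hz : ∀ m n : ℤ, z ≠ (m : ℂ) * ω₁ + (n : ℂ) * ω₂) :
    iteratedDeriv 2 (weierstrassP ω₁ ω₂) z =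
      6 * weierstrassP ω₁ ω₂ z ^ 2 - latticeG₂ ω₁ ω₂ / 2 := by
  let L : PeriodPair := ⟨ω₁, ω₂, hind⟩
  have hzL : z ∉ L.lattice := fun h => by
    obtain ⟨m, n, e⟩ := PeriodPair.mem_lattice.mp h
    exact hz m n e.symm
  have h1 : weierstrassP ω₁ ω₂ = L.weierstrassP := aux_P L
  have h2 : latticeG₂ ω₁ ω₂ = L.g₂ := aux_g L
  rw [h1, h2, iteratedDeriv_succ, iteratedDeriv_one, L.deriv_weierstrassP]
  exact aux_main L z hzL
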